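/- arXiv:2005.04465 — 3 statements merged into one kernel-verified Lean document; each statement's English description precedes it below -/
import Mathlib

section
/- Let A = (A₀, A₁, A₂, A₃) ∈ ℂ⁴ and assume: A₂ is not a negative integer, A₂+A₃ and A₂−A₃ are not negative integers, and neither −A₀+A₁−A₂−A₃ nor A₀+A₁−A₂+A₃ is an odd integer (so that all Pochhammer denominators below are nonzero). Define, for n ∈ ℕ, Cₙ := [(1/2+A₂)ₙ(A₋₋₊₋)ₙ(A₊₋₊₊)ₙ / (n!·(1+A₂−A₃)ₙ(1+A₂+A₃)ₙ)] · Σ_{k=0}^{n} (−n)_k(−A₂−n)_k(A₋₊₊₊)_k(A₊₊₊₋)_k / ((A₋₊₋₋−n)_k(A₊₊₋₊−n)_k(1+A₂)_k·k!). Then C₀ = 1 and, with C₋₁ := 0, for every integer n ≥ 1: 4n(n+2A₂)(n+A₂+A₃)(n+A₂−A₃)·Cₙ = (2(n+A₂)−1)²·(2n² + 4A₂n − A₀² + A₁² + A₂² − A₃² + 1 − 2(n+A₂))·C_{n−1} − (2n+2A₂−1)(2n+2A₂−3)(n+A₀+A₂−1)(n−A₀+A₂−1)·C_{n−2}. (These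 Cₙ are the coefficients of the local solution f⁽∞,+A₂⁾(A; x) = x^{−(1−A₀+A₂)}Σₙ Cₙx^{−n} of Z(A) at x = ∞ with exponent 1−A₀+A₂.) -/
namespace Stmt17

/-- The Pochhammer symbol `(a)ₖ = a(a+1)⋯(a+k−1)`. -/
noncomputable def poch (a : ℂ) (k : ℕ) : ℂ := ∏ i ∈ Finset.range k, (a + (i : ℂ))

/-- The coefficients of the local solution `f⁽∞,+A₂⁾(A;x)` of `Z(A)` at `x = ∞`:
`Cₙ = (1/2+A₂)ₙ(A₋₋₊₋)ₙ(A₊₋₊₊)ₙ/(n!(1+A₂−A₃)ₙ(1+A₂+A₃)ₙ) ·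
₄F₃(−n, −A₂−n, A₋₊₊₊, A₊₊₊₋; A₋₊₋₋−n, A₊₊₋₊−n, 1+A₂; 1)`. -/
noncomputable def C (A₀ A₁ A₂ A₃ : ℂ) (n : ℕ) : ℂ :=
  poch (1 / 2 + A₂) n * poch ((-A₀ - A₁ + A₂ - A₃ + 1) / 2) n
      * poch ((A₀ - A₁ + A₂ + A₃ + 1) / 2) n /
      ((Nat.factorial n : ℂ) * poch (1 + A₂ - A₃) n * poch (1 + A₂ + A₃) n) *
    ∑ k ∈ Finset.range (n + 1),
      poch (-(n : ℂ)) k * poch (-A₂ - (n : ℂ)) k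
          * poch ((-A₀ + A₁ + A₂ + A₃ + 1) / 2) k * poch ((A₀ + A₁ + A₂ - A₃ + 1) / 2) k /
        (poch ((-A₀ + A₁ - A₂ - A₃ + 1) / 2 - (n : ℂ)) k
          * poch ((A₀ + A₁ - A₂ + A₃ + 1) / 2 - (n : ℂ)) k
          * poch (1 + A₂) k * (Nat.factorial k : ℂ))

/-!
Reversing Pochhammer symbols turns `C A₀ A₁ A₂ A₃ n`, up to an explicit factor, into the `n`-th
coefficient of `y z` with `y = ₂F₁(a, b; g; x)`, `z = ₂F₁(c, d; g; x)`, where `g = 1 + A₂` and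
`a + b + c + d = 2 g`. With `θ = x d/dx`, Gauss's equations for `y` and `z` give a closed linear
system for `y z`, the Wronskian `θy z - y θz` and `θy θz`. Because `a + b + c + d = 2 g`, the
Wronskian's equation expresses the difference of two consecutive coefficients of the Wronskian
through those of `y z`. Eliminating `θy θz` leaves the Wronskian only in the form of such a
difference, hence a three-term recurrence for the coefficients of `y z`.
-/

open scoped PowerSeries

section Pochhammer

theorem poch_succ (x : ℂ) (n : ℕ) : poch x (n + 1) = poch x n * (x + n) :=
  Finset.prod_range_succ _ _

theorem poch_eq_ascPochhammer_eval (x : ℂ) (n : ℕ) : poch x n = (ascPochhammer ℂ n).eval x := by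
  induction n with
  | zero => simp [poch]
  | succ n ih => rw [ascPochhammer_succ_eval, ← ih, poch_succ]

theorem ascPochhammer_eval_eq_mul_eval_one_sub_sub {R : Type*} [CommRing R] (x : R) {k n : ℕ}
    (hk : k ≤ n) :
    (ascPochhammer R n).eval x =
      (-1) ^ k * (ascPochhammer R k).eval (1 - x - n) * (ascPochhammer R (n - k)).eval x := by
  have split : (ascPochhammer R n).eval x =
      (ascPochhammer R (n - k)).eval x * (ascPochhammer R k).eval (x + (n - k : ℕ)) := by
    conv_lhs => rw [← Nat.sub_add_cancel hk, ← ascPochhammer_mul]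
    simp
  have reflect : (ascPochhammer R k).eval (1 - x - n) =
      (-1) ^ k * (ascPochhammer R k).eval (x + (n - k : ℕ)) := by
    rw [show 1 - x - (n : R) = -(x + n - 1) by ring, ascPochhammer_eval_neg_eq_descPochhammer,
      descPochhammer_eval_eq_ascPochhammer, Nat.cast_sub hk]
    ring_nf
  rw [split, reflect, ← mul_assoc, ← mul_pow, neg_one_mul, neg_neg, one_pow, one_mul, mul_comm]

theorem ascPochhammer_eval_ne_zero {K : Type*} [Field K] {x : K} (hx : ∀ k : ℕ, x + k ≠ 0)
    (n : ℕ) : (ascPochhammer K n).eval x ≠ 0 := by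
  rw [Ne, ascPochhammer_eval_eq_zero_iff]
  rintro ⟨k, -, hk⟩
  exact hx k (by rw [hk, add_neg_cancel])

theorem ascPochhammer_eval_div_eval_one_sub_sub {K : Type*} [Field K] {x : K} {k n : ℕ}
    (hk : k ≤ n) (hx : (ascPochhammer K n).eval x ≠ 0) :
    (ascPochhammer K n).eval x / (ascPochhammer K k).eval (1 - x - n) =
      (-1) ^ k * (ascPochhammer K (n - k)).eval x := by
  have reverse := ascPochhammer_eval_eq_mul_eval_one_sub_sub x hk
  have hne : (ascPochhammer K k).eval (1 - x - n) ≠ 0 :=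
    right_ne_zero_of_mul (left_ne_zero_of_mul (reverse ▸ hx))
  rw [div_eq_iff hne, reverse]
  ring

end Pochhammer

section DifferentialAlgebra

variable {R A : Type*} [CommRing R] [CommRing A] [Algebra R A]

/-- Gauss's hypergeometric equation `θ(θ + g - 1) y = x (θ + a)(θ + b) y` with parameters
`a, b; g`, for a derivation `θ` of a commutative algebra playing the role of `x d/dx`. -/
def IsHypergeometricSolution (θ : Derivation R A A) (x : A) (a b g : R) (y : A) : Prop :=
  θ (θ y) + (g - 1) • θ y = x * (θ (θ y) + (a + b) • θ y + (a * b) • y)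

/-- The Wronskian of `y` and `z` with respect to the derivation `θ`. -/
def wronskian (θ : Derivation R A A) (y z : A) : A := θ y * z - y * θ z

variable {θ : Derivation R A A} {x y z : A} {a b c d g : R}

namespace IsHypergeometricSolution

theorem mul_equation (hy : IsHypergeometricSolution θ x a b g y)
    (hz : IsHypergeometricSolution θ x c d g z) (hg : a + b + c + d = 2 * g) :
    θ (θ (y * z)) + (g - 1) • θ (y * z) - 2 * (θ y * θ z) =
      x * (θ (θ (y * z)) + g • θ (y * z) + (a * b + c * d) • (y * z)
        + (a + b - g) • wronskian θ y z - 2 * (θ y * θ z)) := by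
  obtain rfl : d = 2 * g - a - b - c := by linear_combination hg
  simp only [IsHypergeometricSolution, wronskian, Algebra.smul_def, Derivation.leibniz,
    map_add, map_sub, map_mul, map_one, map_ofNat] at hy hz ⊢
  linear_combination z * hy + y * hz

theorem wronskian_equation (hy : IsHypergeometricSolution θ x a b g y)
    (hz : IsHypergeometricSolution θ x c d g z) (hg : a + b + c + d = 2 * g) :
    θ (wronskian θ y z) + (g - 1) • wronskian θ y z =
      x * (θ (wronskian θ y z) + g • wronskian θ y z + (a + b - g) • θ (y * z)
        + (a * b - c * d) • (y * z)) := by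
  obtain rfl : d = 2 * g - a - b - c := by linear_combination hg
  simp only [IsHypergeometricSolution, wronskian, Algebra.smul_def, Derivation.leibniz,
    map_add, map_sub, map_mul, map_one, map_ofNat] at hy hz ⊢
  linear_combination z * hy - y * hz

theorem mul_deriv_equation (hy : IsHypergeometricSolution θ x a b g y)
    (hz : IsHypergeometricSolution θ x c d g z) (hg : a + b + c + d = 2 * g) :
    θ (2 * (θ y * θ z)) + (2 * (g - 1)) • (2 * (θ y * θ z)) =
      x * (θ (2 * (θ y * θ z)) + (2 * g) • (2 * (θ y * θ z)) + (a * b + c * d) • θ (y * z)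
        - (a * b - c * d) • wronskian θ y z) := by
  obtain rfl : d = 2 * g - a - b - c := by linear_combination hg
  have two_mul_leibniz (w : A) : θ (2 * w) = 2 * θ w := by simp only [two_mul, map_add]
  simp only [IsHypergeometricSolution, wronskian, Algebra.smul_def, Derivation.leibniz,
    two_mul_leibniz, map_add, map_sub, map_mul, map_one, map_ofNat] at hy hz ⊢
  linear_combination 2 * θ z * hy + 2 * θ y * hz

end IsHypergeometricSolution

end DifferentialAlgebra

section PowerSeries

open PowerSeries (X coeff)

/-- The Euler operator `X d/dX` on formal power series. -/
noncomputable def eulerOperator (R : Type*) [CommRing R] : Derivation R R⟦X⟧ R⟦X⟧ :=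
  (X : R⟦X⟧) • PowerSeries.derivative R

section CommRing

variable {R : Type*} [CommRing R]

theorem coeff_eulerOperator (f : R⟦X⟧) (n : ℕ) :
    coeff n (eulerOperator R f) = n * coeff n f := by
  rw [eulerOperator, Derivation.smul_apply, smul_eq_mul]
  cases n with
  | zero => simp
  | succ n =>
    rw [PowerSeries.coeff_succ_X_mul, PowerSeries.coeff_derivative]
    push_cast
    ring

theorem isHypergeometricSolution_eulerOperator_iff {a b g : R} {y : R⟦X⟧} :
    IsHypergeometricSolution (eulerOperator R) X a b g y ↔
      ∀ n : ℕ, (n + 1) * (g + n) * coeff (n + 1) y = (a + n) * (b + n) * coeff n y := by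
  rw [IsHypergeometricSolution, PowerSeries.ext_iff]
  constructor
  · intro h n
    have := h (n + 1)
    simp only [map_add, PowerSeries.coeff_smul, PowerSeries.coeff_succ_X_mul,
      coeff_eulerOperator, Nat.cast_add, Nat.cast_one] at this
    linear_combination this
  · rintro h (_ | n)
    · rw [PowerSeries.coeff_zero_X_mul, map_add, PowerSeries.coeff_smul, coeff_eulerOperator,
        coeff_eulerOperator, Nat.cast_zero]
      ring
    · simp only [map_add, PowerSeries.coeff_smul, PowerSeries.coeff_succ_X_mul,
        coeff_eulerOperator, Nat.cast_add, Nat.cast_one]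
      linear_combination h n

namespace IsHypergeometricSolution

variable {a b c d g : R} {y z : R⟦X⟧}

theorem coeff_one_mul (hy : IsHypergeometricSolution (eulerOperator R) X a b g y)
    (hz : IsHypergeometricSolution (eulerOperator R) X c d g z) :
    g * coeff 1 (y * z) = (a * b + c * d) * coeff 0 (y * z) := by
  have hy₁ := isHypergeometricSolution_eulerOperator_iff.1 hy 0
  have hz₁ := isHypergeometricSolution_eulerOperator_iff.1 hz 0
  simp only [Nat.cast_zero, zero_add, add_zero, one_mul,
    PowerSeries.coeff_zero_eq_constantCoeff_apply] at hy₁ hz₁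
  rw [PowerSeries.coeff_one_mul, PowerSeries.coeff_zero_eq_constantCoeff_apply, map_mul]
  linear_combination PowerSeries.constantCoeff z * hy₁ + PowerSeries.constantCoeff y * hz₁

theorem coeff_succ_mul (hy : IsHypergeometricSolution (eulerOperator R) X a b g y)
    (hz : IsHypergeometricSolution (eulerOperator R) X c d g z) (hg : a + b + c + d = 2 * g)
    (n : ℕ) :
    (n + 1) * (n + g) * coeff (n + 1) (y * z)
        - coeff (n + 1) (2 * (eulerOperator R y * eulerOperator R z)) =
      (n * (n + g) + a * b + c * d) * coeff n (y * z)
        + (a + b - g) * coeff n (wronskian (eulerOperator R) y z)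
        - coeff n (2 * (eulerOperator R y * eulerOperator R z)) := by
  have h := congrArg (coeff (n + 1)) (hy.mul_equation hz hg)
  simp only [map_add, map_sub, PowerSeries.coeff_smul, PowerSeries.coeff_succ_X_mul,
    coeff_eulerOperator, Nat.cast_add, Nat.cast_one] at h
  linear_combination h

theorem coeff_succ_wronskian (hy : IsHypergeometricSolution (eulerOperator R) X a b g y)
    (hz : IsHypergeometricSolution (eulerOperator R) X c d g z) (hg : a + b + c + d = 2 * g)
    (n : ℕ) :
    (n + g) * (coeff (n + 1) (wronskian (eulerOperator R) y z)
        - coeff n (wronskian (eulerOperator R) y z)) =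
      ((a + b - g) * n + a * b - c * d) * coeff n (y * z) := by
  have h := congrArg (coeff (n + 1)) (hy.wronskian_equation hz hg)
  simp only [map_add, PowerSeries.coeff_smul, PowerSeries.coeff_succ_X_mul,
    coeff_eulerOperator, Nat.cast_add, Nat.cast_one] at h
  linear_combination h

theorem coeff_succ_mul_deriv (hy : IsHypergeometricSolution (eulerOperator R) X a b g y)
    (hz : IsHypergeometricSolution (eulerOperator R) X c d g z) (hg : a + b + c + d = 2 * g)
    (n : ℕ) :
    (n + 2 * g - 1) * coeff (n + 1) (2 * (eulerOperator R y * eulerOperator R z)) =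
      (n + 2 * g) * coeff n (2 * (eulerOperator R y * eulerOperator R z))
        + (a * b + c * d) * n * coeff n (y * z)
        - (a * b - c * d) * coeff n (wronskian (eulerOperator R) y z) := by
  have h := congrArg (coeff (n + 1)) (hy.mul_deriv_equation hz hg)
  simp only [map_add, map_sub, PowerSeries.coeff_smul, PowerSeries.coeff_succ_X_mul,
    coeff_eulerOperator, Nat.cast_add, Nat.cast_one] at h
  linear_combination h

theorem coeff_mul_recurrence (hy : IsHypergeometricSolution (eulerOperator R) X a b g y)
    (hz : IsHypergeometricSolution (eulerOperator R) X c d g z) (hg : a + b + c + d = 2 * g)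
    (n : ℕ) :
    (n + 2) * (n + 2 * g) * (n + 1 + g) * (n + g) * coeff (n + 2) (y * z) =
      (2 * n + 1 + 2 * g) * (n + g) * ((n + 1) * (n + 2 * g) + a * b + c * d)
          * coeff (n + 1) (y * z)
        - (n + a + c) * (n + a + d) * (n + b + c) * (n + b + d) * coeff n (y * z) := by
  have mul₁ := hy.coeff_succ_mul hz hg n
  have mul₂ := hy.coeff_succ_mul hz hg (n + 1)
  have wronskian₁ := hy.coeff_succ_wronskian hz hg n
  have deriv₁ := hy.coeff_succ_mul_deriv hz hg n
  have deriv₂ := hy.coeff_succ_mul_deriv hz hg (n + 1)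
  push_cast at mul₂ deriv₂
  obtain rfl : d = 2 * g - a - b - c := by linear_combination hg
  -- The first summand eliminates the coefficients of `2 * (θ y * θ z)`; what remains of the
  -- Wronskian is the difference of two consecutive coefficients.
  linear_combination (n + g) * ((n + 2 * g) * (mul₂ - mul₁) + deriv₂ - deriv₁)
    - (a * b - c * (2 * g - a - b - c) - (a + b - g) * (n + 2 * g)) * wronskian₁

end IsHypergeometricSolution

end CommRing

section Field

variable {K : Type*} [Field K]

/-- The Gauss series `₂F₁(a, b; g; X)` as a formal power series. -/
noncomputable def gaussSeries (a b g : K) : K⟦X⟧ :=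
  PowerSeries.mk (ordinaryHypergeometricCoefficient a b g)

theorem coeff_gaussSeries (a b g : K) (n : ℕ) :
    coeff n (gaussSeries a b g) = (ascPochhammer K n).eval a * (ascPochhammer K n).eval b /
      ((ascPochhammer K n).eval g * n.factorial) := by
  rw [gaussSeries, PowerSeries.coeff_mk]
  field_simp

variable [CharZero K]

theorem isHypergeometricSolution_gaussSeries (a b : K) {g : K} (hg : ∀ k : ℕ, g + k ≠ 0) :
    IsHypergeometricSolution (eulerOperator K) X a b g (gaussSeries a b g) := by
  refine isHypergeometricSolution_eulerOperator_iff.2 fun n ↦ ?_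
  have hn : (n : K) + 1 ≠ 0 := n.cast_add_one_ne_zero
  have hfact : (n.factorial : K) ≠ 0 := Nat.cast_ne_zero.2 n.factorial_ne_zero
  have hpoch := ascPochhammer_eval_ne_zero hg n
  have hgn := hg n
  simp only [coeff_gaussSeries, ascPochhammer_succ_eval, Nat.factorial_succ, Nat.cast_mul,
    Nat.cast_succ]
  field_simp

theorem coeff_gaussSeries_mul_gaussSeries (a b : K) {c d g : K} {n : ℕ}
    (hc : (ascPochhammer K n).eval c ≠ 0) (hd : (ascPochhammer K n).eval d ≠ 0)
    (hg : (ascPochhammer K n).eval g ≠ 0) :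
    coeff n (gaussSeries a b g * gaussSeries c d g) =
      (ascPochhammer K n).eval c * (ascPochhammer K n).eval d /
          ((ascPochhammer K n).eval g * n.factorial) *
        ∑ k ∈ Finset.range (n + 1),
          (ascPochhammer K k).eval (-(n : K)) * (ascPochhammer K k).eval (1 - g - n)
              * (ascPochhammer K k).eval a * (ascPochhammer K k).eval b /
            ((ascPochhammer K k).eval (1 - d - n) * (ascPochhammer K k).eval (1 - c - n)
              * (ascPochhammer K k).eval g * k.factorial) := by
  rw [PowerSeries.coeff_mul, Finset.Nat.sum_antidiagonal_eq_sum_range_succ_mk, Finset.mul_sum]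
  refine Finset.sum_congr rfl fun k hk ↦ ?_
  replace hk : k ≤ n := Finset.mem_range_succ_iff.1 hk
  have ratio_n : (n.factorial : K) / (ascPochhammer K k).eval (-(n : K)) =
      (-1) ^ k * (n - k).factorial := by
    have hfact : (ascPochhammer K n).eval 1 ≠ 0 := by
      rw [ascPochhammer_eval_one]
      exact Nat.cast_ne_zero.2 n.factorial_ne_zero
    simpa only [ascPochhammer_eval_one, sub_self, zero_sub] using
      ascPochhammer_eval_div_eval_one_sub_sub hk hfact
  symm
  calc
    _ = ((ascPochhammer K n).eval c / (ascPochhammer K k).eval (1 - c - n))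
          * ((ascPochhammer K n).eval d / (ascPochhammer K k).eval (1 - d - n))
          / (((ascPochhammer K n).eval g / (ascPochhammer K k).eval (1 - g - n))
            * (n.factorial / (ascPochhammer K k).eval (-(n : K))))
          * ((ascPochhammer K k).eval a * (ascPochhammer K k).eval b /
            ((ascPochhammer K k).eval g * k.factorial)) := by
      simp only [div_eq_mul_inv, mul_inv, inv_inv]
      ring
    _ = _ := by
      rw [ratio_n, ascPochhammer_eval_div_eval_one_sub_sub hk hc,
        ascPochhammer_eval_div_eval_one_sub_sub hk hd,
        ascPochhammer_eval_div_eval_one_sub_sub hk hg, coeff_gaussSeries, coeff_gaussSeries]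
      obtain hsign | hsign := neg_one_pow_eq_or K k <;> rw [hsign] <;> ring

end Field

end PowerSeries

section Coefficients

open PowerSeries (coeff)

/-- The factor relating `C A₀ A₁ A₂ A₃ n` to the `n`-th coefficient of the product of two Gauss
series; it does not depend on `A₀` and `A₁`. -/
noncomputable def prefactor (A₂ A₃ : ℂ) (n : ℕ) : ℂ :=
  poch (1 / 2 + A₂) n * poch (1 + A₂) n / (poch (1 + A₂ - A₃) n * poch (1 + A₂ + A₃) n)

/-- The product `₂F₁(A₋₊₊₊, A₊₊₊₋; 1 + A₂; X) · ₂F₁(A₋₋₊₋, A₊₋₊₊; 1 + A₂; X)`, in the notation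
of the source for the half-sums `A_{ε₀ε₁ε₂ε₃}`. -/
noncomputable def gaussProduct (A₀ A₁ A₂ A₃ : ℂ) : ℂ⟦X⟧ :=
  gaussSeries ((-A₀ + A₁ + A₂ + A₃ + 1) / 2) ((A₀ + A₁ + A₂ - A₃ + 1) / 2) (1 + A₂) *
    gaussSeries ((-A₀ - A₁ + A₂ - A₃ + 1) / 2) ((A₀ - A₁ + A₂ + A₃ + 1) / 2) (1 + A₂)

variable {A₀ A₁ A₂ A₃ : ℂ}

theorem prefactor_succ {n : ℕ} (hsub : 1 + A₂ - A₃ + n ≠ 0) (hadd : 1 + A₂ + A₃ + n ≠ 0) :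
    (1 + A₂ - A₃ + n) * (1 + A₂ + A₃ + n) * prefactor A₂ A₃ (n + 1) =
      (1 / 2 + A₂ + n) * (1 + A₂ + n) * prefactor A₂ A₃ n := by
  simp only [prefactor, poch_succ]
  field_simp

theorem coeff_one_gaussProduct (hA₂ : ∀ k : ℕ, 1 + A₂ + k ≠ 0) :
    2 * (1 + A₂) * coeff 1 (gaussProduct A₀ A₁ A₂ A₃) =
      ((1 + A₂) ^ 2 - A₀ ^ 2 + A₁ ^ 2 - A₃ ^ 2)
        * coeff 0 (gaussProduct A₀ A₁ A₂ A₃) := by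
  have h := IsHypergeometricSolution.coeff_one_mul
    (isHypergeometricSolution_gaussSeries ((-A₀ + A₁ + A₂ + A₃ + 1) / 2)
      ((A₀ + A₁ + A₂ - A₃ + 1) / 2) hA₂)
    (isHypergeometricSolution_gaussSeries ((-A₀ - A₁ + A₂ - A₃ + 1) / 2)
      ((A₀ - A₁ + A₂ + A₃ + 1) / 2) hA₂)
  rw [← gaussProduct] at h
  linear_combination 2 * h

theorem coeff_gaussProduct_recurrence (hA₂ : ∀ k : ℕ, 1 + A₂ + k ≠ 0) (n : ℕ) :
    2 * (n + 2) * (n + 2 + 2 * A₂) * (n + 2 + A₂) * (n + 1 + A₂)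
        * coeff (n + 2) (gaussProduct A₀ A₁ A₂ A₃) =
      (2 * n + 3 + 2 * A₂) * (n + 1 + A₂)
          * (2 * (n + 1) * (n + 2 + 2 * A₂) + (1 + A₂) ^ 2 - A₀ ^ 2 + A₁ ^ 2 - A₃ ^ 2)
          * coeff (n + 1) (gaussProduct A₀ A₁ A₂ A₃)
        - 2 * (n + 1 + A₂ + A₀) * (n + 1 + A₂ - A₀) * (n + 1 + A₂ + A₃) * (n + 1 + A₂ - A₃)
          * coeff n (gaussProduct A₀ A₁ A₂ A₃) := by
  have h := IsHypergeometricSolution.coeff_mul_recurrence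
    (isHypergeometricSolution_gaussSeries ((-A₀ + A₁ + A₂ + A₃ + 1) / 2)
      ((A₀ + A₁ + A₂ - A₃ + 1) / 2) hA₂)
    (isHypergeometricSolution_gaussSeries ((-A₀ - A₁ + A₂ - A₃ + 1) / 2)
      ((A₀ - A₁ + A₂ + A₃ + 1) / 2) hA₂) (by ring) n
  rw [← gaussProduct] at h
  linear_combination 2 * h

theorem C_eq_prefactor_mul_coeff_gaussProduct (hA₂ : ∀ k : ℕ, 1 + A₂ + k ≠ 0)
    (hc : ∀ k : ℕ, (-A₀ - A₁ + A₂ - A₃ + 1) / 2 + k ≠ 0)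
    (hd : ∀ k : ℕ, (A₀ - A₁ + A₂ + A₃ + 1) / 2 + k ≠ 0) (n : ℕ) :
    C A₀ A₁ A₂ A₃ n = prefactor A₂ A₃ n * coeff n (gaussProduct A₀ A₁ A₂ A₃) := by
  have hg := ascPochhammer_eval_ne_zero hA₂ n
  rw [gaussProduct, coeff_gaussSeries_mul_gaussSeries _ _ (ascPochhammer_eval_ne_zero hc n)
    (ascPochhammer_eval_ne_zero hd n) hg, C, prefactor,
    show -A₂ - (n : ℂ) = 1 - (1 + A₂) - n by ring,
    show (-A₀ + A₁ - A₂ - A₃ + 1) / 2 - (n : ℂ) = 1 - (A₀ - A₁ + A₂ + A₃ + 1) / 2 - n by ring,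
    show (A₀ + A₁ - A₂ + A₃ + 1) / 2 - (n : ℂ) = 1 - (-A₀ - A₁ + A₂ - A₃ + 1) / 2 - n by ring]
  simp only [poch_eq_ascPochhammer_eval]
  rw [← mul_assoc]
  congr 1
  field_simp

theorem prefactor_mul_coeff_one (hA₂ : ∀ k : ℕ, 1 + A₂ + k ≠ 0)
    (hsub : ∀ k : ℕ, 1 + A₂ - A₃ + k ≠ 0) (hadd : ∀ k : ℕ, 1 + A₂ + A₃ + k ≠ 0) :
    4 * (1 + 2 * A₂) * (1 + A₂ + A₃) * (1 + A₂ - A₃)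
        * (prefactor A₂ A₃ 1 * coeff 1 (gaussProduct A₀ A₁ A₂ A₃)) =
      (1 + 2 * A₂) ^ 2 * ((1 + A₂) ^ 2 - A₀ ^ 2 + A₁ ^ 2 - A₃ ^ 2)
        * (prefactor A₂ A₃ 0 * coeff 0 (gaussProduct A₀ A₁ A₂ A₃)) := by
  have hprefactor := prefactor_succ (hsub 0) (hadd 0)
  have hcoeff := coeff_one_gaussProduct (A₀ := A₀) (A₁ := A₁) (A₃ := A₃) hA₂
  simp only [Nat.cast_zero, add_zero, zero_add] at hprefactor
  linear_combination 4 * (1 + 2 * A₂) * coeff 1 (gaussProduct A₀ A₁ A₂ A₃) * hprefactor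
    + (1 + 2 * A₂) ^ 2 * prefactor A₂ A₃ 0 * hcoeff

theorem prefactor_mul_coeff_recurrence (hA₂ : ∀ k : ℕ, 1 + A₂ + k ≠ 0)
    (hsub : ∀ k : ℕ, 1 + A₂ - A₃ + k ≠ 0) (hadd : ∀ k : ℕ, 1 + A₂ + A₃ + k ≠ 0) (n : ℕ) :
    4 * (n + 2) * (n + 2 + 2 * A₂) * (n + 2 + A₂ + A₃) * (n + 2 + A₂ - A₃)
        * (prefactor A₂ A₃ (n + 2) * coeff (n + 2) (gaussProduct A₀ A₁ A₂ A₃)) =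
      (2 * n + 3 + 2 * A₂) ^ 2
          * (2 * (n + 1) * (n + 2 + 2 * A₂) + (1 + A₂) ^ 2 - A₀ ^ 2 + A₁ ^ 2 - A₃ ^ 2)
          * (prefactor A₂ A₃ (n + 1) * coeff (n + 1) (gaussProduct A₀ A₁ A₂ A₃))
        - (2 * n + 3 + 2 * A₂) * (2 * n + 1 + 2 * A₂) * (n + 1 + A₂ + A₀) * (n + 1 + A₂ - A₀)
          * (prefactor A₂ A₃ n * coeff n (gaussProduct A₀ A₁ A₂ A₃)) := by
  have hprefactor₁ := prefactor_succ (hsub n) (hadd n)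
  have hprefactor₂ := prefactor_succ (hsub (n + 1)) (hadd (n + 1))
  have hcoeff := coeff_gaussProduct_recurrence (A₀ := A₀) (A₁ := A₁) (A₃ := A₃) hA₂ n
  push_cast at hprefactor₂
  apply mul_left_cancel₀ (mul_ne_zero (hsub n) (hadd n))
  linear_combination
    4 * (1 + A₂ - A₃ + n) * (1 + A₂ + A₃ + n) * (n + 2) * (n + 2 + 2 * A₂)
        * coeff (n + 2) (gaussProduct A₀ A₁ A₂ A₃) * hprefactor₂
      + (2 * (n + 2) * (n + 2 + 2 * A₂) * (2 * n + 3 + 2 * A₂) * (n + 2 + A₂)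
            * coeff (n + 2) (gaussProduct A₀ A₁ A₂ A₃)
          - (2 * n + 3 + 2 * A₂) ^ 2
            * (2 * (n + 1) * (n + 2 + 2 * A₂) + (1 + A₂) ^ 2 - A₀ ^ 2 + A₁ ^ 2 - A₃ ^ 2)
            * coeff (n + 1) (gaussProduct A₀ A₁ A₂ A₃)) * hprefactor₁
      + (2 * n + 3 + 2 * A₂) * (1 / 2 + A₂ + n) * prefactor A₂ A₃ n * hcoeff

theorem one_add_add_natCast_ne_zero {x : ℂ} (hx : ∀ m : ℕ, 1 ≤ m → x ≠ -(m : ℂ)) (k : ℕ) :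
    1 + x + k ≠ 0 := fun h ↦
  hx (k + 1) k.succ_pos (by push_cast; linear_combination h)

theorem one_sub_div_two_add_natCast_ne_zero {x : ℂ} (hx : ∀ m : ℤ, Odd m → x ≠ (m : ℂ)) (k : ℕ) :
    (1 - x) / 2 + k ≠ 0 := fun h ↦
  hx (2 * k + 1) (odd_two_mul_add_one _) (by push_cast; linear_combination -2 * h)

end Coefficients

/-- The explicit `₄F₃(·;1)`-coefficients solve the recurrence `Rc_∞(A)` with
`C₀ = 1` and the convention `C₋₁ = 0`. -/
theorem stmt_17 (A₀ A₁ A₂ A₃ : ℂ)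
    (h1 : ∀ m : ℕ, 1 ≤ m → A₂ ≠ -(m : ℂ))
    (h2 : ∀ m : ℕ, 1 ≤ m → A₂ + A₃ ≠ -(m : ℂ))
    (h3 : ∀ m : ℕ, 1 ≤ m → A₂ - A₃ ≠ -(m : ℂ))
    (h4 : ∀ m : ℤ, Odd m → -A₀ + A₁ - A₂ - A₃ ≠ (m : ℂ))
    (h5 : ∀ m : ℤ, Odd m → A₀ + A₁ - A₂ + A₃ ≠ (m : ℂ)) :
    C A₀ A₁ A₂ A₃ 0 = 1 ∧
    ∀ n : ℕ, 1 ≤ n →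
      4 * (n : ℂ) * ((n : ℂ) + 2 * A₂) * ((n : ℂ) + A₂ + A₃) * ((n : ℂ) + A₂ - A₃)
          * C A₀ A₁ A₂ A₃ n
        = (2 * ((n : ℂ) + A₂) - 1) ^ 2
            * (2 * (n : ℂ) ^ 2 + 4 * A₂ * (n : ℂ) - A₀ ^ 2 + A₁ ^ 2 + A₂ ^ 2 - A₃ ^ 2 + 1
                - 2 * ((n : ℂ) + A₂)) * C A₀ A₁ A₂ A₃ (n - 1)
          - (2 * (n : ℂ) + 2 * A₂ - 1) * (2 * (n : ℂ) + 2 * A₂ - 3)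
              * ((n : ℂ) + A₀ + A₂ - 1) * ((n : ℂ) - A₀ + A₂ - 1)
              * (if n = 1 then 0 else C A₀ A₁ A₂ A₃ (n - 2)) := by
  have hA₂ := one_add_add_natCast_ne_zero h1
  have hadd (k : ℕ) : 1 + A₂ + A₃ + k ≠ 0 := by
    simpa only [add_assoc] using one_add_add_natCast_ne_zero h2 k
  have hsub (k : ℕ) : 1 + A₂ - A₃ + k ≠ 0 := by
    simpa only [add_sub_assoc] using one_add_add_natCast_ne_zero h3 k
  have hc (k : ℕ) : (-A₀ - A₁ + A₂ - A₃ + 1) / 2 + k ≠ 0 := by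
    convert one_sub_div_two_add_natCast_ne_zero h5 k using 3
    ring
  have hd (k : ℕ) : (A₀ - A₁ + A₂ + A₃ + 1) / 2 + k ≠ 0 := by
    convert one_sub_div_two_add_natCast_ne_zero h4 k using 3
    ring
  have hC := C_eq_prefactor_mul_coeff_gaussProduct hA₂ hc hd
  refine ⟨by simp [C, poch], fun n hn ↦ ?_⟩
  match n, hn with
  | 1, _ =>
    simp only [hC, Nat.sub_self, Nat.cast_one, if_true]
    linear_combination prefactor_mul_coeff_one (A₀ := A₀) (A₁ := A₁) hA₂ hsub hadd
  | n + 2, _ =>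
    rw [if_neg (by omega), Nat.add_sub_cancel, show n + 2 - 1 = n + 1 from rfl, hC, hC, hC]
    push_cast
    linear_combination prefactor_mul_coeff_recurrence (A₀ := A₀) (A₁ := A₁) hA₂ hsub hadd n

end Stmt17
end

section
/- Let A = (A₀, A₁, A₂, A₃) ∈ ℂ⁴, let ε ∈ (0,1), and let C : ℕ → ℂ be such that the series Σ_{n≥0} Cₙxⁿ converges for x ∈ (0, ε) and the function u(x) := x^{A₀−1/2}·Σ_{n≥0} Cₙxⁿ (complex power of the positive real x) satisfies Z(A)u = 0 on (0, ε). Then for every integer n ≥ 2: n(n−1)(n+A₀−1/2)(n−A₀−1/2)·Cₙ = (n−1)²·(2n² − 4n − A₀² + A₁² − A₂² − A₃² + 5/2)·C_{n−1} − (n+A₂−3/2)(n−A₂−3/2)(n+A₃−3/2)(n−A₃−3/2)·C_{n−2}. (This is the recurrence relation Rc₁(A).) -/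
namespace Stmt18

/-- The fourth-order Fuchsian operator `Z(A)` of the paper, acting on functions of
a real variable. -/
noncomputable def Zop (A₀ A₁ A₂ A₃ : ℂ) (f : ℝ → ℂ) (x : ℝ) : ℂ :=
  ((x : ℂ) ^ 3 * ((x : ℂ) - 1) ^ 2) * deriv^[4] f x
    + (-2 * (x : ℂ) ^ 2 * ((x : ℂ) - 1) * (2 * A₀ * (x : ℂ) - 2 * A₀ - 5 * (x : ℂ) + 3))
        * deriv^[3] f x
    + ((x : ℂ) * ((6 * A₀ ^ 2 - A₂ ^ 2 - A₃ ^ 2 - 24 * A₀ + 25) * (x : ℂ) ^ 2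
        + (-11 * A₀ ^ 2 - A₁ ^ 2 + A₂ ^ 2 + A₃ ^ 2 + 36 * A₀ - 59 / 2) * (x : ℂ)
        + (10 * A₀ - 9) * (2 * A₀ - 3) / 4)) * deriv^[2] f x
    + (-((2 * A₀ - 3) * (2 * A₀ ^ 2 - A₂ ^ 2 - A₃ ^ 2 - 6 * A₀ + 5)) * (x : ℂ) ^ 2
        + (A₀ - 1) * (6 * A₀ ^ 2 + 2 * A₁ ^ 2 - 2 * A₂ ^ 2 - 2 * A₃ ^ 2 - 16 * A₀ + 11) * (x : ℂ)
        - (2 * A₀ - 3) * (2 * A₀ - 1) ^ 2 / 4) * deriv f x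
    + ((A₀ - 1 + A₃) * (A₀ - 1 - A₃) * (A₀ - 1 + A₂) * (A₀ - 1 - A₂) * (x : ℂ)
        - (2 * A₀ - 1) ^ 2 * (A₀ ^ 2 + A₁ ^ 2 - A₂ ^ 2 - A₃ ^ 2 - 2 * A₀ + 1) / 4) * f x

/-!
On `x ^ s * ∑ Cₙ xⁿ` the operator `xᵏ (d/dx)ᵏ` multiplies `Cₙ` by the falling factorial
`(s + n)(s + n - 1) ⋯ (s + n - k + 1)`. Since `x * Z(A) = ∑ₖ qₖ(x) xᵏ (d/dx)ᵏ` with quadratic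
polynomials `qₖ`, the function `x * Z(A)u` is `x ^ s` times a function `F` analytic at `0`. If
`Z(A)u = 0` on `(0, ε)`, then `F` vanishes by the identity theorem, and its Taylor coefficient of
order `n` is a combination of `Cₙ`, `Cₙ₋₁` and `Cₙ₋₂`, which for `s = A₀ - 1/2` factors as `Rc₁(A)`.
-/

open Filter Topology Polynomial
open scoped Nat PowerSeries

section TaylorSeries

variable {𝕜 : Type*} [NontriviallyNormedField 𝕜]

lemma analyticAt_eval (p : 𝕜[X]) (z : 𝕜) : AnalyticAt 𝕜 (fun w => p.eval w) z :=
  AnalyticOnNhd.eval_polynomial p z trivial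

/-- The formal Taylor series of `f` at `0`; meaningful only for `f` smooth at `0`, and only in
characteristic zero because of the division by `n !`. -/
noncomputable def taylorSeries (f : 𝕜 → 𝕜) : 𝕜⟦X⟧ :=
  PowerSeries.mk fun n => iteratedDeriv n f 0 / n !

lemma coeff_taylorSeries (f : 𝕜 → 𝕜) (n : ℕ) :
    (taylorSeries f).coeff n = iteratedDeriv n f 0 / n ! :=
  PowerSeries.coeff_mk _ _

lemma taylorSeries_eq_zero_of_eventuallyEq {f : 𝕜 → 𝕜} (hf : f =ᶠ[𝓝 0] 0) :
    taylorSeries f = 0 := by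
  ext n
  rw [coeff_taylorSeries, hf.iteratedDeriv_eq n]
  simp

lemma taylorSeries_deriv [CharZero 𝕜] (f : 𝕜 → 𝕜) :
    taylorSeries (deriv f) = PowerSeries.derivative 𝕜 (taylorSeries f) := by
  ext n
  rw [PowerSeries.coeff_derivative, coeff_taylorSeries, coeff_taylorSeries, iteratedDeriv_succ',
    Nat.factorial_succ]
  push_cast
  field_simp

variable [CompleteSpace 𝕜]

lemma taylorSeries_add {f g : 𝕜 → 𝕜} (hf : AnalyticAt 𝕜 f 0) (hg : AnalyticAt 𝕜 g 0) :
    taylorSeries (f + g) = taylorSeries f + taylorSeries g := by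
  ext n
  simp only [map_add, coeff_taylorSeries]
  rw [iteratedDeriv_add hf.contDiffAt hg.contDiffAt, add_div]

lemma taylorSeries_sum {ι : Type*} (I : Finset ι) {f : ι → 𝕜 → 𝕜}
    (hf : ∀ i ∈ I, AnalyticAt 𝕜 (f i) 0) :
    taylorSeries (∑ i ∈ I, f i) = ∑ i ∈ I, taylorSeries (f i) := by
  ext n
  simp only [map_sum, coeff_taylorSeries]
  rw [iteratedDeriv_sum fun i hi => (hf i hi).contDiffAt, Finset.sum_div]

variable [CharZero 𝕜]

lemma taylorSeries_mul {f g : 𝕜 → 𝕜} (hf : AnalyticAt 𝕜 f 0) (hg : AnalyticAt 𝕜 g 0) :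
    taylorSeries (f * g) = taylorSeries f * taylorSeries g := by
  ext n
  have factorial_ne_zero : (n ! : 𝕜) ≠ 0 := Nat.cast_ne_zero.2 n.factorial_ne_zero
  simp only [PowerSeries.coeff_mul, coeff_taylorSeries]
  rw [iteratedDeriv_mul hf.contDiffAt hg.contDiffAt,
    Finset.Nat.sum_antidiagonal_eq_sum_range_succ
      (fun i j => iteratedDeriv i f 0 / i ! * (iteratedDeriv j g 0 / j !)), Finset.sum_div]
  refine Finset.sum_congr rfl fun i hi => ?_
  rw [Nat.cast_choose 𝕜 (Finset.mem_range_succ_iff.1 hi)]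
  field_simp

lemma taylorSeries_eq_mk_of_hasFPowerSeriesAt {f : 𝕜 → 𝕜} {c : ℕ → 𝕜}
    (hf : HasFPowerSeriesAt f (FormalMultilinearSeries.ofScalars 𝕜 c) 0) :
    taylorSeries f = PowerSeries.mk c := by
  have coeffs_eq := hf.eq_formalMultilinearSeries hf.analyticAt.hasFPowerSeriesAt
  rw [FormalMultilinearSeries.ofScalars_series_eq_iff] at coeffs_eq
  rw [coeffs_eq, taylorSeries]

lemma taylorSeries_eval (p : 𝕜[X]) : taylorSeries (fun z => p.eval z) = (p : 𝕜⟦X⟧) := by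
  refine taylorSeries_eq_mk_of_hasFPowerSeriesAt (hasFPowerSeriesAt_iff.2 (.of_forall fun z => ?_))
  rw [zero_add, p.eval_eq_sum_range]
  simp only [FormalMultilinearSeries.coeff_ofScalars, smul_eq_mul, mul_comm (p.coeff _)]
  refine hasSum_sum_of_ne_finset_zero fun n hn => ?_
  rw [p.coeff_eq_zero_of_natDegree_lt (by simpa [Nat.lt_succ_iff] using hn), mul_zero]

end TaylorSeries

lemma hasFPowerSeriesAt_tsum_of_summable {𝕜 : Type*} [NontriviallyNormedField 𝕜] [CompleteSpace 𝕜]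
    {c : ℕ → 𝕜} {z : 𝕜} (hz : z ≠ 0) (hc : Summable fun n => c n * z ^ n) :
    HasFPowerSeriesAt (fun w => ∑' n, c n * w ^ n) (FormalMultilinearSeries.ofScalars 𝕜 c) 0 := by
  have terms_tendsto : Tendsto (fun n => ‖FormalMultilinearSeries.ofScalars 𝕜 c n‖ * ‖z‖₊ ^ n)
      atTop (𝓝 0) := by
    simpa [FormalMultilinearSeries.ofScalars_norm] using hc.tendsto_atTop_zero.norm
  have radius_pos : 0 < (FormalMultilinearSeries.ofScalars 𝕜 c).radius :=
    (ENNReal.coe_pos.2 (nnnorm_pos.2 hz)).trans_le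
      (FormalMultilinearSeries.le_radius_of_tendsto _ terms_tendsto)
  convert (FormalMultilinearSeries.hasFPowerSeriesOnBall _ radius_pos).hasFPowerSeriesAt using 1
  exact (FormalMultilinearSeries.ofScalarsSum_eq_tsum c).symm

section Frobenius

variable {𝕜 : Type*} [NontriviallyNormedField 𝕜]

/-- The Euler operator `z d/dz` conjugated by `z ^ s`, so that `z (z ^ s g)' = z ^ s * eulerOp s g`
without reference to a branch of `z ^ s`. -/
noncomputable def eulerOp (s : 𝕜) (g : 𝕜 → 𝕜) (z : 𝕜) : 𝕜 :=
  s * g z + z * deriv g z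

/-- The cofactor of `z ^ (s - k)` in the `k`-th derivative of `z ^ s * g z`. -/
noncomputable def derivCofactor (s : 𝕜) (g : 𝕜 → 𝕜) : ℕ → 𝕜 → 𝕜
  | 0 => g
  | k + 1 => eulerOp (s - k) (derivCofactor s g k)

variable [CompleteSpace 𝕜] {g : 𝕜 → 𝕜}

lemma analyticAt_eulerOp (s : 𝕜) {z : 𝕜} (hg : AnalyticAt 𝕜 g z) :
    AnalyticAt 𝕜 (eulerOp s g) z :=
  (analyticAt_const.mul hg).add (analyticAt_id.mul hg.deriv)

lemma analyticAt_derivCofactor (s : 𝕜) {z : 𝕜} (hg : AnalyticAt 𝕜 g z) (k : ℕ) :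
    AnalyticAt 𝕜 (derivCofactor s g k) z := by
  induction k with
  | zero => exact hg
  | succ k ih => exact analyticAt_eulerOp _ ih

variable [CharZero 𝕜]

lemma coeff_taylorSeries_eulerOp (s : 𝕜) (hg : AnalyticAt 𝕜 g 0) (n : ℕ) :
    (taylorSeries (eulerOp s g)).coeff n = (s + n) * (taylorSeries g).coeff n := by
  have eulerOp_eq : eulerOp s g =
      (fun z => (C s : 𝕜[X]).eval z) * g + (fun z => (X : 𝕜[X]).eval z) * deriv g := by
    ext z
    simp [eulerOp]
  rw [eulerOp_eq,
    taylorSeries_add ((analyticAt_eval _ 0).mul hg) ((analyticAt_eval _ 0).mul hg.deriv),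
    taylorSeries_mul (analyticAt_eval _ 0) hg, taylorSeries_mul (analyticAt_eval _ 0) hg.deriv,
    taylorSeries_eval, taylorSeries_eval, taylorSeries_deriv, coe_C, coe_X, map_add,
    PowerSeries.coeff_C_mul]
  cases n with
  | zero => simp
  | succ n =>
    rw [PowerSeries.coeff_succ_X_mul, PowerSeries.coeff_derivative]
    push_cast
    ring

lemma coeff_taylorSeries_derivCofactor (s : 𝕜) (hg : AnalyticAt 𝕜 g 0) (k n : ℕ) :
    (taylorSeries (derivCofactor s g k)).coeff n =
      (descPochhammer 𝕜 k).eval (s + n) * (taylorSeries g).coeff n := by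
  induction k with
  | zero => simp [derivCofactor]
  | succ k ih =>
    rw [derivCofactor, coeff_taylorSeries_eulerOp _ (analyticAt_derivCofactor s hg k), ih,
      descPochhammer_succ_eval]
    ring

end Frobenius

section ComplexPower

variable {g : ℂ → ℂ} (s : ℂ)

lemma hasDerivAt_cpow_mul {x : ℝ} (hx : 0 < x) (hg : DifferentiableAt ℂ g x) :
    HasDerivAt (fun t : ℝ => (t : ℂ) ^ s * g t) ((x : ℂ) ^ (s - 1) * eulerOp s g x) x := by
  have hx_ne : (x : ℂ) ≠ 0 := Complex.ofReal_ne_zero.2 hx.ne'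
  have hasDerivAt_cpow : HasDerivAt (fun z : ℂ => z ^ s) (s * (x : ℂ) ^ (s - 1)) x := by
    simpa using (hasDerivAt_id (x : ℂ)).cpow_const (c := s) (.inl (by simpa using hx))
  refine (hasDerivAt_cpow.mul hg.hasDerivAt).comp_ofReal.congr_deriv ?_
  rw [eulerOp, Complex.cpow_sub _ _ hx_ne, Complex.cpow_one]
  field_simp

lemma tendsto_ofReal_nhdsGT_zero : Tendsto ((↑) : ℝ → ℂ) (𝓝[>] 0) (𝓝[≠] 0) :=
  tendsto_nhdsWithin_iff.2
    ⟨(Complex.continuous_ofReal.tendsto' 0 0 Complex.ofReal_zero).mono_left nhdsWithin_le_nhds,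
      eventually_mem_nhdsWithin.mono fun _ hx => Complex.ofReal_ne_zero.2 (ne_of_gt hx)⟩

lemma eventually_iterate_deriv_cpow_mul (hg : AnalyticAt ℂ g 0) (k : ℕ) :
    ∀ᶠ x : ℝ in 𝓝[>] 0, deriv^[k] (fun t : ℝ => (t : ℂ) ^ s * g t) x =
      (x : ℂ) ^ (s - k) * derivCofactor s g k x := by
  induction k with
  | zero => simp [derivCofactor]
  | succ k ih =>
    have cofactor_analytic := (tendsto_ofReal_nhdsGT_zero.mono_right nhdsWithin_le_nhds).eventually
      (analyticAt_derivCofactor s hg k).eventually_analyticAt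
    filter_upwards [eventually_eventually_nhdsWithin.2 ih, cofactor_analytic, self_mem_nhdsWithin]
      with x ih_near_x cofactor_analytic_x hx
    rw [isOpen_Ioi.nhdsWithin_eq hx] at ih_near_x
    rw [Function.iterate_succ_apply', EventuallyEq.deriv_eq ih_near_x,
      (hasDerivAt_cpow_mul (s - k) hx cofactor_analytic_x.differentiableAt).deriv, derivCofactor,
      Nat.cast_succ, sub_sub]

lemma taylorSeries_eq_zero_of_eventually_nhdsGT {F : ℂ → ℂ} (hF : AnalyticAt ℂ F 0)
    (hF_zero : ∀ᶠ x : ℝ in 𝓝[>] 0, F x = 0) : taylorSeries F = 0 :=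
  taylorSeries_eq_zero_of_eventuallyEq <| hF.frequently_zero_iff_eventually_zero.1 <|
    tendsto_ofReal_nhdsGT_zero.frequently hF_zero.frequently

lemma eventually_sum_mul_derivCofactor_eq_zero {m : ℕ} (q : Fin m → ℂ → ℂ)
    (hg : AnalyticAt ℂ g 0)
    (hode : ∀ᶠ x : ℝ in 𝓝[>] 0,
      ∑ k, q k x * (x : ℂ) ^ (k : ℕ) * deriv^[k] (fun t : ℝ => (t : ℂ) ^ s * g t) x = 0) :
    ∀ᶠ x : ℝ in 𝓝[>] 0, (∑ k, q k * derivCofactor s g k) (x : ℂ) = 0 := by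
  have iterate_deriv_eq := eventually_all.2 fun k : Fin m =>
    eventually_iterate_deriv_cpow_mul s hg k
  filter_upwards [hode, iterate_deriv_eq, self_mem_nhdsWithin] with x hode_x iterate_deriv_eq_x hx
  have hx_ne : (x : ℂ) ≠ 0 := Complex.ofReal_ne_zero.2 (ne_of_gt hx)
  have cpow_ne : (x : ℂ) ^ s ≠ 0 := by simp [Complex.cpow_eq_zero_iff, hx_ne]
  refine (mul_eq_zero.1 ?_).resolve_left cpow_ne
  rw [← hode_x, Finset.sum_apply, Finset.mul_sum]
  refine Finset.sum_congr rfl fun k _ => ?_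
  rw [iterate_deriv_eq_x, Complex.cpow_sub _ _ hx_ne, Complex.cpow_natCast, Pi.mul_apply]
  field_simp

theorem sum_taylorSeries_mul_mk_descPochhammer_eq_zero {m : ℕ} {q : Fin m → ℂ → ℂ}
    (hq : ∀ k, AnalyticAt ℂ (q k) 0) (hg : AnalyticAt ℂ g 0)
    (hode : ∀ᶠ x : ℝ in 𝓝[>] 0,
      ∑ k, q k x * (x : ℂ) ^ (k : ℕ) * deriv^[k] (fun t : ℝ => (t : ℂ) ^ s * g t) x = 0) :
    ∑ k, taylorSeries (q k) * PowerSeries.mk (fun n =>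
      (descPochhammer ℂ k).eval (s + n) * (taylorSeries g).coeff n) = 0 := by
  have analyticAt_cofactor (k : Fin m) := analyticAt_derivCofactor s hg k
  have analyticAt_term (k : Fin m) := (hq k).mul (analyticAt_cofactor k)
  have mk_eq (k : Fin m) : PowerSeries.mk (fun n =>
      (descPochhammer ℂ k).eval (s + n) * (taylorSeries g).coeff n) =
        taylorSeries (derivCofactor s g k) := by
    ext n
    rw [PowerSeries.coeff_mk, coeff_taylorSeries_derivCofactor s hg]
  calc ∑ k, taylorSeries (q k) * PowerSeries.mk (fun n =>
        (descPochhammer ℂ k).eval (s + n) * (taylorSeries g).coeff n)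
    _ = ∑ k, taylorSeries (q k * derivCofactor s g k) :=
        Finset.sum_congr rfl fun k _ => by
          rw [mk_eq, taylorSeries_mul (hq k) (analyticAt_cofactor k)]
    _ = taylorSeries (∑ k, q k * derivCofactor s g k) :=
        (taylorSeries_sum _ fun k _ => analyticAt_term k).symm
    _ = 0 := taylorSeries_eq_zero_of_eventually_nhdsGT
        (Finset.analyticAt_sum _ fun k _ => analyticAt_term k)
        (eventually_sum_mul_derivCofactor_eq_zero s q hg hode)

end ComplexPower

lemma coeff_add_two_quadratic_mul {R : Type*} [CommSemiring R] (a b c : R) (f : R⟦X⟧) (n : ℕ) :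
    (((C a + C b * X + C c * X ^ 2 : R[X]) : R⟦X⟧) * f).coeff (n + 2) =
      a * f.coeff (n + 2) + b * f.coeff (n + 1) + c * f.coeff n := by
  simp only [coe_add, coe_mul, coe_C, coe_X, coe_pow, add_mul, mul_assoc, map_add,
    PowerSeries.coeff_C_mul, PowerSeries.coeff_succ_X_mul, PowerSeries.coeff_X_pow_mul]

section Zop

variable (A₀ A₁ A₂ A₃ : ℂ)

/-- The polynomials `qₖ` with `x * Z(A) = ∑ₖ qₖ(x) xᵏ (d/dx)ᵏ`. -/
noncomputable def zopCoeff : Fin 5 → ℂ[X] :=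
  ![C 0
      + C (-((2 * A₀ - 1) ^ 2 * (A₀ ^ 2 + A₁ ^ 2 - A₂ ^ 2 - A₃ ^ 2 - 2 * A₀ + 1) / 4)) * X
      + C ((A₀ - 1 + A₃) * (A₀ - 1 - A₃) * (A₀ - 1 + A₂) * (A₀ - 1 - A₂)) * X ^ 2,
    C (-((2 * A₀ - 3) * (2 * A₀ - 1) ^ 2 / 4))
      + C ((A₀ - 1) * (6 * A₀ ^ 2 + 2 * A₁ ^ 2 - 2 * A₂ ^ 2 - 2 * A₃ ^ 2 - 16 * A₀ + 11)) * X
      + C (-((2 * A₀ - 3) * (2 * A₀ ^ 2 - A₂ ^ 2 - A₃ ^ 2 - 6 * A₀ + 5))) * X ^ 2,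
    C ((10 * A₀ - 9) * (2 * A₀ - 3) / 4)
      + C (-11 * A₀ ^ 2 - A₁ ^ 2 + A₂ ^ 2 + A₃ ^ 2 + 36 * A₀ - 59 / 2) * X
      + C (6 * A₀ ^ 2 - A₂ ^ 2 - A₃ ^ 2 - 24 * A₀ + 25) * X ^ 2,
    C (-2 * (2 * A₀ - 3)) + C (8 * A₀ - 16) * X + C (-2 * (2 * A₀ - 5)) * X ^ 2,
    C 1 + C (-2) * X + C 1 * X ^ 2]

lemma mul_Zop_eq_sum_zopCoeff (f : ℝ → ℂ) (x : ℝ) :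
    x * Zop A₀ A₁ A₂ A₃ f x =
      ∑ k, (zopCoeff A₀ A₁ A₂ A₃ k).eval (x : ℂ) * (x : ℂ) ^ (k : ℕ) * deriv^[k] f x := by
  simp only [Zop, zopCoeff, Fin.sum_univ_five, Matrix.cons_val, eval_add, eval_mul, eval_C, eval_X,
    eval_pow, Fin.coe_ofNat_eq_mod, Nat.reduceMod, Function.iterate_zero, Function.iterate_one, id]
  ring

theorem recurrence_of_eventually_Zop_eq_zero {g : ℂ → ℂ} (hg : AnalyticAt ℂ g 0)
    (hode : ∀ᶠ x : ℝ in 𝓝[>] 0,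
      Zop A₀ A₁ A₂ A₃ (fun t : ℝ => (t : ℂ) ^ (A₀ - 1 / 2) * g t) x = 0) (n : ℕ) :
    ((n : ℂ) + 2) * (n + 1) * (n + A₀ + 3 / 2) * (n - A₀ + 3 / 2) * (taylorSeries g).coeff (n + 2)
      = (n + 1) ^ 2 * (2 * n ^ 2 + 4 * n - A₀ ^ 2 + A₁ ^ 2 - A₂ ^ 2 - A₃ ^ 2 + 5 / 2)
          * (taylorSeries g).coeff (n + 1)
        - (n + A₂ + 1 / 2) * (n - A₂ + 1 / 2) * (n + A₃ + 1 / 2) * (n - A₃ + 1 / 2)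
          * (taylorSeries g).coeff n := by
  have sum_eq_zero := sum_taylorSeries_mul_mk_descPochhammer_eq_zero (A₀ - 1 / 2)
    (fun k => analyticAt_eval (zopCoeff A₀ A₁ A₂ A₃ k) 0) hg <|
    hode.mono fun x hx => by rw [← mul_Zop_eq_sum_zopCoeff, hx, mul_zero]
  have coeff_eq_zero := congrArg (PowerSeries.coeff (n + 2)) sum_eq_zero
  simp only [taylorSeries_eval, zopCoeff, Fin.sum_univ_five, Matrix.cons_val,
    map_add (PowerSeries.coeff (n + 2)), map_zero (PowerSeries.coeff (n + 2)),
    coeff_add_two_quadratic_mul, PowerSeries.coeff_mk, descPochhammer_eval_eq_prod_range,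
    Finset.prod_range_succ, Finset.prod_range_zero, Fin.coe_ofNat_eq_mod,
    Nat.reduceMod] at coeff_eq_zero
  push_cast at coeff_eq_zero
  linear_combination coeff_eq_zero

end Zop

/-- The coefficients of a local solution `x^{A₀−1/2} Σ Cₙxⁿ` of `Z(A)` at `x = 0`
satisfy the recurrence `Rc₁(A)`. -/
theorem stmt_18 (A₀ A₁ A₂ A₃ : ℂ) (ε : ℝ) (hε : ε ∈ Set.Ioo (0 : ℝ) 1) (C : ℕ → ℂ)
    (hconv : ∀ x ∈ Set.Ioo (0 : ℝ) ε, Summable fun n : ℕ => C n * (x : ℂ) ^ n)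
    (hode : ∀ x ∈ Set.Ioo (0 : ℝ) ε,
      Zop A₀ A₁ A₂ A₃
        (fun t : ℝ => (t : ℂ) ^ (A₀ - 1 / 2) * ∑' n : ℕ, C n * (t : ℂ) ^ n) x = 0) :
    ∀ n : ℕ, 2 ≤ n →
      (n : ℂ) * ((n : ℂ) - 1) * ((n : ℂ) + A₀ - 1 / 2) * ((n : ℂ) - A₀ - 1 / 2) * C n
        = ((n : ℂ) - 1) ^ 2
            * (2 * (n : ℂ) ^ 2 - 4 * (n : ℂ) - A₀ ^ 2 + A₁ ^ 2 - A₂ ^ 2 - A₃ ^ 2 + 5 / 2)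
            * C (n - 1)
          - ((n : ℂ) + A₂ - 3 / 2) * ((n : ℂ) - A₂ - 3 / 2) * ((n : ℂ) + A₃ - 3 / 2)
              * ((n : ℂ) - A₃ - 3 / 2) * C (n - 2) := by
  intro n hn
  obtain ⟨m, rfl⟩ := Nat.exists_eq_add_of_le' hn
  obtain ⟨r, hr⟩ := Set.nonempty_Ioo.2 hε.1
  have g_series : HasFPowerSeriesAt (fun z : ℂ => ∑' n, C n * z ^ n) _ 0 :=
    hasFPowerSeriesAt_tsum_of_summable (Complex.ofReal_ne_zero.2 hr.1.ne') (hconv r hr)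
  have recurrence := recurrence_of_eventually_Zop_eq_zero A₀ A₁ A₂ A₃ g_series.analyticAt
    (mem_of_superset (Ioo_mem_nhdsGT hε.1) hode) m
  simp only [taylorSeries_eq_mk_of_hasFPowerSeriesAt g_series, PowerSeries.coeff_mk] at recurrence
  simp only [Nat.add_sub_cancel, show m + 2 - 1 = m + 1 from rfl]
  push_cast
  linear_combination recurrence

end Stmt18
end

section
/- Let A = (A₀, A₁, A₂, A₃) ∈ ℂ⁴. Then the solution space of Q(A) has the following symmetries. (i) If u : (0,1) → ℂ is three-times differentiable and Q(A₁, A₀, A₂, A₃)u = 0 on (0,1), then the function x ↦ u(1−x) satisfies Q(A₀, A₁, A₂, A₃) on (0,1). (ii) If u : (−∞,0) → ℂ is three-times differentiable and Q(A₃, A₁, A₂, A₀)u = 0 on (−∞,0), then the function v(x) := (−1/x)^{1+2A₂}·u(1/x) (complex power of the positive real −1/x) satisfies Q(A₀, A₁, A₂, A₃)v = 0 on (−∞,0). (iii) If u : (0,1) → ℂ is three-times differentiable and Q(A₀, A₃, A₂, A₁)u = 0 on (0,1), then the function v(x) := (1−x)^{−1−2A₂}·u(x/(x−1)) (complex power of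 the positive real 1−x) satisfies Q(A₀, A₁, A₂, A₃)v = 0 on (−∞,0). -/
namespace Stmt19

/-- `f` is `n`-times differentiable on `U`. -/
def IterDiffOn (n : ℕ) (f : ℝ → ℂ) (U : Set ℝ) : Prop :=
  ∀ k < n, ∀ x ∈ U, DifferentiableAt ℝ (deriv^[k] f) x

/-- The third-order operator `Q(A)`. -/
noncomputable def Qop (A₀ A₁ A₂ A₃ : ℂ) (g : ℝ → ℂ) (x : ℝ) : ℂ :=
  (x : ℂ) ^ 2 * ((x : ℂ) - 1) ^ 2 * deriv^[3] g x
    + ((2 * A₂ + 3) * ((x : ℂ) - 1) * (x : ℂ) * (2 * (x : ℂ) - 1)) * deriv^[2] g x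
    + (A₀ ^ 2 * (x : ℂ) - A₀ ^ 2 - A₁ ^ 2 * (x : ℂ) + 5 * A₂ ^ 2 * (x : ℂ) ^ 2
        - 5 * A₂ ^ 2 * (x : ℂ) + A₂ ^ 2 + 12 * A₂ * (x : ℂ) ^ 2 - 12 * A₂ * (x : ℂ)
        + 2 * A₂ - A₃ ^ 2 * (x : ℂ) ^ 2 + A₃ ^ 2 * (x : ℂ) + 7 * (x : ℂ) ^ 2
        - 7 * (x : ℂ) + 1) * deriv g x
    + ((1 / 2) * (2 * A₂ + 1) * (A₀ ^ 2 - A₁ ^ 2 + 2 * A₂ ^ 2 * (x : ℂ) - A₂ ^ 2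
        + 4 * A₂ * (x : ℂ) - 2 * A₂ - 2 * A₃ ^ 2 * (x : ℂ) + A₃ ^ 2
        + 2 * (x : ℂ) - 1)) * g x

/-!
The three substitutions permute the singular points `0, 1, ∞` of `Q(A)`. The reflection `x ↦ 1 - x`
and the weighted inversion `u ↦ |x|^(-a) u(1/x)`, `a = 1 + 2A₂`, each intertwine `-Q(A)` with the
operator whose parameters are permuted accordingly. Since `x/(x-1) = 1 - 1/(1-x)`, the third
symmetry is the inversion conjugated by the reflection. Under the inversion `-d/dx` becomes
`y² d/dy + a y` with `y = 1/x`, so the only computation is the expansion of the square and the cube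
of that operator.
-/

open Filter Topology

theorem Qop_eq_of_eventuallyEq (A₀ A₁ A₂ A₃ : ℂ) {f g : ℝ → ℂ} {x : ℝ} (hfg : f =ᶠ[𝓝 x] g) :
    Qop A₀ A₁ A₂ A₃ f x = Qop A₀ A₁ A₂ A₃ g x := by
  have iterate_eq (n : ℕ) : deriv^[n] f x = deriv^[n] g x := by
    simpa only [iteratedDeriv_eq_iterate] using hfg.iteratedDeriv_eq n
  simp only [Qop, iterate_eq, hfg.deriv_eq, hfg.eq_of_nhds]

theorem IterDiffOn.mono {m n : ℕ} {f : ℝ → ℂ} {U : Set ℝ} (hf : IterDiffOn n f U) (hmn : m ≤ n) :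
    IterDiffOn m f U :=
  fun k hk => hf k (hk.trans_le hmn)

theorem IterDiffOn.hasDerivAt {n k : ℕ} {f : ℝ → ℂ} {U : Set ℝ} {x : ℝ} (hf : IterDiffOn n f U)
    (hk : k < n) (hx : x ∈ U) : HasDerivAt (deriv^[k] f) (deriv^[k + 1] f x) x := by
  rw [Function.iterate_succ_apply']
  exact (hf k hk x hx).hasDerivAt

theorem iterate_deriv_comp_const_sub (n : ℕ) (f : ℝ → ℂ) (c : ℝ) :
    deriv^[n] (fun t => f (c - t)) = fun t => (-1) ^ n * deriv^[n] f (c - t) := by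
  simpa [iteratedDeriv_eq_iterate] using iteratedDeriv_comp_const_sub n f c

theorem IterDiffOn.comp_const_sub {n : ℕ} {f : ℝ → ℂ} {U : Set ℝ} (hf : IterDiffOn n f U) (c : ℝ) :
    IterDiffOn n (fun t => f (c - t)) ((c - ·) ⁻¹' U) := by
  intro k hk x hx
  rw [iterate_deriv_comp_const_sub]
  exact ((hf k hk _ hx).comp x (differentiableAt_id.const_sub c)).const_mul _

theorem Qop_comp_one_sub (A₀ A₁ A₂ A₃ : ℂ) (u : ℝ → ℂ) (x : ℝ) :
    Qop A₀ A₁ A₂ A₃ (fun t => u (1 - t)) x = -Qop A₁ A₀ A₂ A₃ u (1 - x) := by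
  have deriv_eq : deriv (fun t => u (1 - t)) x = -deriv u (1 - x) := by
    simpa using congrFun (iterate_deriv_comp_const_sub 1 u 1) x
  simp only [Qop, iterate_deriv_comp_const_sub, deriv_eq]
  push_cast
  ring

/-- The Kelvin transform `t ↦ |t|^(-a) u(1/t)` of exponent `a` on the real line. Taking `|t|` in the
weight treats both half-lines at once; at `t = 0` the value is junk. -/
noncomputable def kelvin (a : ℂ) (u : ℝ → ℂ) (t : ℝ) : ℂ :=
  ((|t| : ℝ) : ℂ) ^ (-a) * u t⁻¹

theorem kelvin_of_neg (a : ℂ) (u : ℝ → ℂ) {t : ℝ} (ht : t < 0) :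
    kelvin a u t = ((-t⁻¹ : ℝ) : ℂ) ^ a * u t⁻¹ := by
  have arg_ne_pi : ((-t : ℝ) : ℂ).arg ≠ Real.pi := by
    rw [Complex.arg_ofReal_of_nonneg (neg_pos.2 ht).le]
    exact Real.pi_ne_zero.symm
  rw [kelvin, abs_of_neg ht, neg_inv, Complex.ofReal_inv, Complex.inv_cpow _ _ arg_ne_pi,
    Complex.cpow_neg]

theorem hasDerivAt_abs_cpow (c : ℂ) {t : ℝ} (ht : t ≠ 0) :
    HasDerivAt (fun s : ℝ => ((|s| : ℝ) : ℂ) ^ c) (c * (t : ℂ)⁻¹ * ((|t| : ℝ) : ℂ) ^ c) t := by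
  have abs_ne : ((|t| : ℝ) : ℂ) ≠ 0 := by simpa using ht
  have sign_eq : ((SignType.sign t : ℝ) : ℂ) = (t : ℂ)⁻¹ * (|t| : ℝ) := by
    rw [← self_mul_sign t, Complex.ofReal_mul, inv_mul_cancel_left₀ (Complex.ofReal_ne_zero.2 ht)]
  have abs_mem_slitPlane : ((|t| : ℝ) : ℂ) ∈ Complex.slitPlane := by simpa using ht
  refine ((Complex.hasStrictDerivAt_cpow_const abs_mem_slitPlane).hasDerivAt.comp_ofReal.scomp t
    (hasDerivAt_abs ht)).congr_deriv ?_
  rw [Complex.real_smul, sign_eq, Complex.cpow_sub _ _ abs_ne, Complex.cpow_one]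
  field_simp

theorem hasDerivAt_kelvin (a : ℂ) {w : ℝ → ℂ} {w' : ℂ} {t : ℝ} (ht : t ≠ 0)
    (hw : HasDerivAt w w' t⁻¹) :
    HasDerivAt (kelvin a w)
      (-(((|t| : ℝ) : ℂ) ^ (-a) * ((t⁻¹ : ℝ) ^ 2 * w' + a * (t⁻¹ : ℝ) * w t⁻¹))) t := by
  have comp_inv : HasDerivAt (fun s => w s⁻¹) (-((t⁻¹ : ℝ) : ℂ) ^ 2 * w') t := by
    refine (hw.scomp t (hasDerivAt_inv ht)).congr_deriv ?_
    simp
  refine ((hasDerivAt_abs_cpow (-a) ht).fun_mul comp_inv).congr_deriv ?_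
  push_cast
  ring

theorem eventually_ne_zero_and_inv_mem {U : Set ℝ} {x : ℝ} (hU : IsOpen U) (hx : x ≠ 0)
    (hxU : x⁻¹ ∈ U) : ∀ᶠ t in 𝓝 x, t ≠ 0 ∧ t⁻¹ ∈ U :=
  (eventually_ne_nhds hx).and ((continuousAt_inv₀ hx).eventually_mem (hU.mem_nhds hxU))

theorem hasDerivAt_const_mul_ofReal_pow_mul (c : ℂ) (n : ℕ) {f : ℝ → ℂ} {f' : ℂ} {y : ℝ}
    (hf : HasDerivAt f f' y) :
    HasDerivAt (fun y : ℝ => c * (y : ℂ) ^ n * f y)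
      (c * (n * (y : ℂ) ^ (n - 1) * f y + (y : ℂ) ^ n * f')) y := by
  refine (((hasDerivAt_pow n (y : ℂ)).comp_ofReal.const_mul c).fun_mul hf).congr_deriv ?_
  ring

section IterateDerivKelvin

variable (a : ℂ) {u : ℝ → ℂ} {U : Set ℝ} {x : ℝ}

theorem deriv_kelvin (hx : x ≠ 0) (hu : DifferentiableAt ℝ u x⁻¹) :
    deriv (kelvin a u) x = -kelvin a (fun y => (y : ℂ) ^ 2 * deriv u y + a * y * u y) x :=
  (hasDerivAt_kelvin a hx hu.hasDerivAt).deriv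

theorem iterate_deriv_two_kelvin (hU : IsOpen U) (hu : IterDiffOn 2 u U) (hx : x ≠ 0)
    (hxU : x⁻¹ ∈ U) :
    deriv^[2] (kelvin a u) x = kelvin a (fun y => (y : ℂ) ^ 4 * deriv^[2] u y
      + 2 * (a + 1) * (y : ℂ) ^ 3 * deriv u y + a * (a + 1) * (y : ℂ) ^ 2 * u y) x := by
  have first_deriv : deriv (kelvin a u) =ᶠ[𝓝 x]
      fun t => -kelvin a (fun y => 1 * (y : ℂ) ^ 2 * deriv u y + a * (y : ℂ) ^ 1 * u y) t := by
    filter_upwards [eventually_ne_zero_and_inv_mem hU hx hxU] with t ⟨ht, htU⟩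
    simpa using deriv_kelvin a ht (hu 0 two_pos _ htU)
  have hu₀ : HasDerivAt u (deriv u x⁻¹) x⁻¹ := hu.hasDerivAt two_pos hxU
  have hu₁ : HasDerivAt (deriv u) (deriv^[2] u x⁻¹) x⁻¹ := hu.hasDerivAt one_lt_two hxU
  rw [Function.iterate_succ_apply', Function.iterate_one, first_deriv.deriv_eq,
    (hasDerivAt_kelvin a hx ((hasDerivAt_const_mul_ofReal_pow_mul 1 2 hu₁).fun_add
      (hasDerivAt_const_mul_ofReal_pow_mul a 1 hu₀))).fun_neg.deriv, kelvin]
  push_cast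
  ring

theorem iterate_deriv_three_kelvin (hU : IsOpen U) (hu : IterDiffOn 3 u U) (hx : x ≠ 0)
    (hxU : x⁻¹ ∈ U) :
    deriv^[3] (kelvin a u) x = -kelvin a (fun y => (y : ℂ) ^ 6 * deriv^[3] u y
      + 3 * (a + 2) * (y : ℂ) ^ 5 * deriv^[2] u y
      + 3 * (a + 1) * (a + 2) * (y : ℂ) ^ 4 * deriv u y
      + a * (a + 1) * (a + 2) * (y : ℂ) ^ 3 * u y) x := by
  have second_deriv : deriv^[2] (kelvin a u) =ᶠ[𝓝 x] kelvin a (fun y =>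
      1 * (y : ℂ) ^ 4 * deriv^[2] u y + 2 * (a + 1) * (y : ℂ) ^ 3 * deriv u y
        + a * (a + 1) * (y : ℂ) ^ 2 * u y) := by
    filter_upwards [eventually_ne_zero_and_inv_mem hU hx hxU] with t ⟨ht, htU⟩
    simpa only [one_mul] using
      iterate_deriv_two_kelvin a hU (hu.mono (Nat.le_succ 2)) ht htU
  have hu₀ : HasDerivAt u (deriv u x⁻¹) x⁻¹ := hu.hasDerivAt three_pos hxU
  have hu₁ : HasDerivAt (deriv u) (deriv^[2] u x⁻¹) x⁻¹ :=
    hu.hasDerivAt (k := 1) (by norm_num) hxU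
  have hu₂ : HasDerivAt (deriv^[2] u) (deriv^[3] u x⁻¹) x⁻¹ := hu.hasDerivAt (by norm_num) hxU
  rw [Function.iterate_succ_apply', second_deriv.deriv_eq,
    (hasDerivAt_kelvin a hx (((hasDerivAt_const_mul_ofReal_pow_mul 1 4 hu₂).fun_add
      (hasDerivAt_const_mul_ofReal_pow_mul _ 3 hu₁)).fun_add
        (hasDerivAt_const_mul_ofReal_pow_mul _ 2 hu₀))).deriv, kelvin]
  push_cast
  ring

end IterateDerivKelvin

theorem Qop_kelvin (A₀ A₁ A₂ A₃ : ℂ) {u : ℝ → ℂ} {U : Set ℝ} {x : ℝ} (hU : IsOpen U)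
    (hu : IterDiffOn 3 u U) (hx : x ≠ 0) (hxU : x⁻¹ ∈ U) :
    Qop A₀ A₁ A₂ A₃ (kelvin (1 + 2 * A₂) u) x
      = -kelvin (1 + 2 * A₂) (Qop A₃ A₁ A₂ A₀ u) x := by
  have hxC : (x : ℂ) ≠ 0 := Complex.ofReal_ne_zero.2 hx
  have hu₀ : DifferentiableAt ℝ u x⁻¹ := hu 0 three_pos _ hxU
  rw [Qop, deriv_kelvin _ hx hu₀,
    iterate_deriv_two_kelvin _ hU (hu.mono (by norm_num)) hx hxU,
    iterate_deriv_three_kelvin _ hU hu hx hxU]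
  simp only [kelvin, Qop, Complex.ofReal_inv]
  field_simp
  ring

/-- The Pfaff transform `t ↦ |1 - t|^(-a) u(t/(t-1))` of exponent `a`, defined as the Kelvin
transform conjugated by the reflection `t ↦ 1 - t`; at `t = 1` the value is junk. -/
noncomputable def pfaff (a : ℂ) (u : ℝ → ℂ) (t : ℝ) : ℂ :=
  kelvin a (fun y => u (1 - y)) (1 - t)

theorem pfaff_of_lt_one (a : ℂ) (u : ℝ → ℂ) {t : ℝ} (ht : t < 1) :
    pfaff a u t = ((1 - t : ℝ) : ℂ) ^ (-a) * u (t / (t - 1)) := by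
  have sub_one_ne : t - 1 ≠ 0 := (sub_neg.2 ht).ne
  have inner_eq : 1 - (1 - t)⁻¹ = t / (t - 1) := by
    rw [← neg_sub t 1]
    field_simp
    ring
  rw [pfaff, kelvin, abs_of_pos (sub_pos.2 ht), inner_eq]

theorem Qop_pfaff (A₀ A₁ A₂ A₃ : ℂ) {u : ℝ → ℂ} {U : Set ℝ} {x : ℝ} (hU : IsOpen U)
    (hu : IterDiffOn 3 u U) (hx : x ≠ 1) (hxU : 1 - (1 - x)⁻¹ ∈ U) :
    Qop A₀ A₁ A₂ A₃ (pfaff (1 + 2 * A₂) u) x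
      = -pfaff (1 + 2 * A₂) (Qop A₀ A₃ A₂ A₁ u) x := by
  have reflected_open : IsOpen ((1 - ·) ⁻¹' U) := hU.preimage (continuous_sub_left 1)
  calc Qop A₀ A₁ A₂ A₃ (pfaff (1 + 2 * A₂) u) x
      = -Qop A₁ A₀ A₂ A₃ (kelvin (1 + 2 * A₂) fun y => u (1 - y)) (1 - x) :=
        Qop_comp_one_sub A₀ A₁ A₂ A₃ _ x
    _ = kelvin (1 + 2 * A₂) (Qop A₃ A₀ A₂ A₁ fun y => u (1 - y)) (1 - x) := by
        rw [Qop_kelvin A₁ A₀ A₂ A₃ reflected_open (hu.comp_const_sub 1)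
          (sub_ne_zero.2 hx.symm) hxU, neg_neg]
    _ = -pfaff (1 + 2 * A₂) (Qop A₀ A₃ A₂ A₁ u) x := by
        simp only [pfaff, kelvin, Qop_comp_one_sub, mul_neg]

/-- Symmetries of the solution space of `Q(A)`:
(i) `x ↦ 1−x` with `(A₀,A₁)` exchanged; (ii) the Euler-type transform
`v(x) = (−1/x)^{1+2A₂} u(1/x)` with `(A₀,A₃)` exchanged; (iii) the Pfaff-type
transform `v(x) = (1−x)^{−1−2A₂} u(x/(x−1))` with `(A₁,A₃)` exchanged. -/
theorem stmt_19 (A₀ A₁ A₂ A₃ : ℂ) :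
    (∀ u : ℝ → ℂ, IterDiffOn 3 u (Set.Ioo 0 1) →
      (∀ x ∈ Set.Ioo (0 : ℝ) 1, Qop A₁ A₀ A₂ A₃ u x = 0) →
      ∀ x ∈ Set.Ioo (0 : ℝ) 1, Qop A₀ A₁ A₂ A₃ (fun t : ℝ => u (1 - t)) x = 0)
    ∧ (∀ u : ℝ → ℂ, IterDiffOn 3 u (Set.Iio 0) →
      (∀ x ∈ Set.Iio (0 : ℝ), Qop A₃ A₁ A₂ A₀ u x = 0) →
      ∀ x ∈ Set.Iio (0 : ℝ),
        Qop A₀ A₁ A₂ A₃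
          (fun t : ℝ => ((-t⁻¹ : ℝ) : ℂ) ^ (1 + 2 * A₂) * u t⁻¹) x = 0)
    ∧ (∀ u : ℝ → ℂ, IterDiffOn 3 u (Set.Ioo 0 1) →
      (∀ x ∈ Set.Ioo (0 : ℝ) 1, Qop A₀ A₃ A₂ A₁ u x = 0) →
      ∀ x ∈ Set.Iio (0 : ℝ),
        Qop A₀ A₁ A₂ A₃
          (fun t : ℝ => ((1 - t : ℝ) : ℂ) ^ (-1 - 2 * A₂) * u (t / (t - 1))) x = 0) := by
  refine ⟨fun u _ hQ x hx => ?_, fun u hu hQ x hx => ?_, fun u hu hQ x hx => ?_⟩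
  · rw [Qop_comp_one_sub, hQ _ (Set.Ioo.one_sub_mem hx), neg_zero]
  · have inv_mem : x⁻¹ ∈ Set.Iio (0 : ℝ) := Set.mem_Iio.2 (inv_lt_zero.2 hx)
    have v_eq : (fun t : ℝ => ((-t⁻¹ : ℝ) : ℂ) ^ (1 + 2 * A₂) * u t⁻¹) =ᶠ[𝓝 x]
        kelvin (1 + 2 * A₂) u := by
      filter_upwards [isOpen_Iio.mem_nhds hx] with t ht using (kelvin_of_neg _ u ht).symm
    rw [Qop_eq_of_eventuallyEq _ _ _ _ v_eq, Qop_kelvin A₀ A₁ A₂ A₃ isOpen_Iio hu hx.ne inv_mem,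
      kelvin, hQ _ inv_mem, mul_zero, neg_zero]
  · have hx₁ : x < 1 := hx.trans one_pos
    have inv_mem : (1 - x)⁻¹ ∈ Set.Ioo (0 : ℝ) 1 :=
      ⟨inv_pos.2 (sub_pos.2 hx₁), inv_lt_one_of_one_lt₀ (lt_sub_comm.1 (by simpa using hx))⟩
    have arg_mem : 1 - (1 - x)⁻¹ ∈ Set.Ioo (0 : ℝ) 1 := Set.Ioo.one_sub_mem inv_mem
    have v_eq : (fun t : ℝ => ((1 - t : ℝ) : ℂ) ^ (-1 - 2 * A₂) * u (t / (t - 1))) =ᶠ[𝓝 x]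
        pfaff (1 + 2 * A₂) u := by
      filter_upwards [isOpen_Iio.mem_nhds hx₁] with t ht
      rw [pfaff_of_lt_one _ u ht, neg_add']
    rw [Qop_eq_of_eventuallyEq _ _ _ _ v_eq, Qop_pfaff A₀ A₁ A₂ A₃ isOpen_Ioo hu hx₁.ne arg_mem,
      pfaff, kelvin, hQ _ arg_mem, mul_zero, neg_zero]

end Stmt19
end
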